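/- Every algebra S(0,0,0,b,0,d) (e²=f, f²=0, ef=bf, fe=df) is isomorphic to exactly one of the following: S(0,0,0,0,0,0), S(0,0,0,0,0,1), or S(0,0,0,1,0,λ) for some λ ∈ K. Specifically: if b=d=0 it equals S(0,0,0,0,0,0); if b=0, d≠0 it is isomorphic to S(0,0,0,0,0,1); and if b≠0 it is isomorphic to S(0,0,0,1,0,d/b). -/

import Mathlib

/-- The 2-dimensional algebra S(p,q,a,b,c,d) on K² with basis e = (1,0), f = (0,1) and
multiplication e² = f, f² = pe+qf, ef = ae+bf, fe = ce+df. -/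
def mulS {K : Type*} [Field K] (p q a b c d : K) (x y : K × K) : K × K :=
  (x.1*y.2*a + x.2*y.1*c + x.2*y.2*p,
   x.1*y.1 + x.1*y.2*b + x.2*y.1*d + x.2*y.2*q)

/-- Endo-commutativity: (xy)² = x²y² for all x, y. -/
def IsEC {K : Type*} [Field K] (m : K × K → K × K → K × K) : Prop :=
  ∀ x y : K × K, m (m x y) (m x y) = m (m x x) (m y y)

/-- Two multiplications on K² give isomorphic algebras iff there is a bijective
K-linear map preserving multiplication. -/
def AlgIso {K : Type*} [Field K] (m₁ m₂ : K × K → K × K → K × K) : Prop :=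
  ∃ φ : (K × K) ≃ₗ[K] (K × K), ∀ u v : K × K, φ (m₁ u v) = m₂ (φ u) (φ v)

/-!
A multiplicative isomorphism from `S(0,0,0,b,0,d)` to `S(0,0,0,b',0,d')` sends `f = e²` to the
square of the image of `e`, which is a multiple of `f`. Comparing the images of `ef` and `fe` then
shows that `(b, d) = x • (b', d')`, where `x` is the `e`-coordinate of the image of `e`. Conversely,
`e ↦ x e`, `f ↦ x² f` realises every such rescaling. The isomorphism classes are therefore the
orbits of `Kˣ` on `K²`, with representatives `(0, 0)`, `(0, 1)` and `(1, l)`.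
-/

section MulS

variable {K : Type*} [Field K]

theorem mulS_e_e (p q a b c d : K) : mulS p q a b c d (1, 0) (1, 0) = (0, 1) := by
  simp [mulS]

theorem mulS_e_f (p q a b c d : K) : mulS p q a b c d (1, 0) (0, 1) = (a, b) := by
  simp [mulS]

theorem mulS_f_e (p q a b c d : K) : mulS p q a b c d (0, 1) (1, 0) = (c, d) := by
  simp [mulS]

theorem algIso_mulS_rescale (p q a b c d : K) {x : K} (hx : x ≠ 0) :
    AlgIso (mulS (x ^ 3 * p) (x ^ 2 * q) (x ^ 2 * a) (x * b) (x ^ 2 * c) (x * d))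
      (mulS p q a b c d) := by
  refine ⟨(LinearEquiv.smulOfNeZero K K x hx).prodCongr
    (LinearEquiv.smulOfNeZero K K (x ^ 2) (pow_ne_zero 2 hx)), fun u v => ?_⟩
  ext <;> simp only [mulS, LinearEquiv.prodCongr_apply, LinearEquiv.smulOfNeZero_apply,
    smul_eq_mul] <;> ring

section Hom

variable {b d b' d' : K} {φ : K × K →ₗ[K] K × K}

theorem map_f_eq_of_map_mulS
    (hφ : ∀ u v, φ (mulS 0 0 0 b 0 d u v) = mulS 0 0 0 b' 0 d' (φ u) (φ v)) :
    φ (0, 1) = (0, (φ (1, 0)).1 * ((φ (1, 0)).1 + (φ (1, 0)).2 * (b' + d'))) := by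
  rw [← mulS_e_e 0 0 0 b 0 d, hφ]
  ext <;> simp only [mulS, mul_zero, add_zero]
  ring

theorem fst_map_e_ne_zero_of_map_mulS
    (hφ : ∀ u v, φ (mulS 0 0 0 b 0 d u v) = mulS 0 0 0 b' 0 d' (φ u) (φ v))
    (hf : φ (0, 1) ≠ 0) : (φ (1, 0)).1 ≠ 0 := by
  intro he
  apply hf
  rw [map_f_eq_of_map_mulS hφ, he, zero_mul, Prod.mk_zero_zero]

theorem eq_fst_map_e_mul_of_map_mulS
    (hφ : ∀ u v, φ (mulS 0 0 0 b 0 d u v) = mulS 0 0 0 b' 0 d' (φ u) (φ v))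
    (hf : φ (0, 1) ≠ 0) : b = (φ (1, 0)).1 * b' ∧ d = (φ (1, 0)).1 * d' := by
  have fst_map_f : (φ (0, 1)).1 = 0 := by rw [map_f_eq_of_map_mulS hφ]
  have snd_map_f : (φ (0, 1)).2 ≠ 0 := fun h => hf (Prod.ext fst_map_f h)
  have map_smul_f (t : K) : φ (0, t) = t • φ (0, 1) := by
    rw [← map_smul, Prod.smul_mk, smul_zero, smul_eq_mul, mul_one]
  have map_ef : b • φ (0, 1) = mulS 0 0 0 b' 0 d' (φ (1, 0)) (φ (0, 1)) := by
    rw [← map_smul_f, ← hφ, mulS_e_f]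
  have map_fe : d • φ (0, 1) = mulS 0 0 0 b' 0 d' (φ (0, 1)) (φ (1, 0)) := by
    rw [← map_smul_f, ← hφ, mulS_f_e]
  have snd_map_ef : b * (φ (0, 1)).2 = (φ (1, 0)).1 * (φ (0, 1)).2 * b' := by
    simpa [mulS, fst_map_f] using congrArg Prod.snd map_ef
  have snd_map_fe : d * (φ (0, 1)).2 = (φ (0, 1)).2 * (φ (1, 0)).1 * d' := by
    simpa [mulS, fst_map_f] using congrArg Prod.snd map_fe
  constructor <;> apply mul_right_cancel₀ snd_map_f
  · linear_combination snd_map_ef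
  · linear_combination snd_map_fe

end Hom

theorem algIso_mulS_iff_exists_mul {b d b' d' : K} :
    AlgIso (mulS 0 0 0 b 0 d) (mulS 0 0 0 b' 0 d') ↔ ∃ x ≠ 0, b = x * b' ∧ d = x * d' := by
  constructor
  · rintro ⟨φ, hφ⟩
    have hf : φ.toLinearMap (0, 1) ≠ 0 := by simp
    exact ⟨_, fst_map_e_ne_zero_of_map_mulS hφ hf, eq_fst_map_e_mul_of_map_mulS hφ hf⟩
  · rintro ⟨x, hx, rfl, rfl⟩
    simpa only [mul_zero] using algIso_mulS_rescale 0 0 0 b' 0 d' hx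

theorem algIso_mulS_zero_zero_iff {b d : K} :
    AlgIso (mulS 0 0 0 b 0 d) (mulS 0 0 0 0 0 0) ↔ b = 0 ∧ d = 0 := by
  rw [algIso_mulS_iff_exists_mul]
  simp only [mul_zero]
  exact ⟨fun ⟨_, _, h⟩ => h, fun h => ⟨1, one_ne_zero, h⟩⟩

theorem algIso_mulS_zero_one_iff {b d : K} :
    AlgIso (mulS 0 0 0 b 0 d) (mulS 0 0 0 0 0 1) ↔ b = 0 ∧ d ≠ 0 := by
  rw [algIso_mulS_iff_exists_mul]
  simp only [mul_zero, mul_one]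
  constructor
  · rintro ⟨x, hx, hb, rfl⟩
    exact ⟨hb, hx⟩
  · rintro ⟨hb, hd⟩
    exact ⟨d, hd, hb, rfl⟩

theorem algIso_mulS_one_iff {b d l : K} :
    AlgIso (mulS 0 0 0 b 0 d) (mulS 0 0 0 1 0 l) ↔ b ≠ 0 ∧ d / b = l := by
  rw [algIso_mulS_iff_exists_mul]
  simp only [mul_one]
  constructor
  · rintro ⟨x, hx, rfl, rfl⟩
    exact ⟨hx, mul_div_cancel_left₀ l hx⟩
  · rintro ⟨hb, rfl⟩
    exact ⟨b, hb, rfl, (mul_div_cancel₀ d hb).symm⟩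

end MulS

/-- Every S(0,0,0,b,0,d) is isomorphic to exactly one of S(0,0,0,0,0,0), S(0,0,0,0,0,1),
S(0,0,0,1,0,λ); specifically it equals S(0,0,0,0,0,0) if b = d = 0, is isomorphic to
S(0,0,0,0,0,1) if b = 0 and d ≠ 0, and to S(0,0,0,1,0,d/b) if b ≠ 0. -/
theorem stmt9 {K : Type*} [Field K] (b d : K) :
    ((b = 0 ∧ d = 0) → mulS (0:K) 0 0 b 0 d = mulS 0 0 0 0 0 0) ∧
    ((b = 0 ∧ d ≠ 0) → AlgIso (mulS (0:K) 0 0 b 0 d) (mulS 0 0 0 0 0 1)) ∧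
    (b ≠ 0 → AlgIso (mulS (0:K) 0 0 b 0 d) (mulS 0 0 0 1 0 (d/b))) ∧
    (AlgIso (mulS (0:K) 0 0 b 0 d) (mulS 0 0 0 0 0 0) ∨
     AlgIso (mulS (0:K) 0 0 b 0 d) (mulS 0 0 0 0 0 1) ∨
     ∃ l : K, AlgIso (mulS (0:K) 0 0 b 0 d) (mulS 0 0 0 1 0 l)) ∧
    ¬(AlgIso (mulS (0:K) 0 0 b 0 d) (mulS 0 0 0 0 0 0) ∧
      AlgIso (mulS (0:K) 0 0 b 0 d) (mulS 0 0 0 0 0 1)) ∧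
    (∀ l : K, ¬(AlgIso (mulS (0:K) 0 0 b 0 d) (mulS 0 0 0 0 0 0) ∧
      AlgIso (mulS (0:K) 0 0 b 0 d) (mulS 0 0 0 1 0 l))) ∧
    (∀ l : K, ¬(AlgIso (mulS (0:K) 0 0 b 0 d) (mulS 0 0 0 0 0 1) ∧
      AlgIso (mulS (0:K) 0 0 b 0 d) (mulS 0 0 0 1 0 l))) ∧
    (∀ l l' : K, l ≠ l' → ¬(AlgIso (mulS (0:K) 0 0 b 0 d) (mulS 0 0 0 1 0 l) ∧
      AlgIso (mulS (0:K) 0 0 b 0 d) (mulS 0 0 0 1 0 l'))) := by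
  simp only [algIso_mulS_zero_zero_iff, algIso_mulS_zero_one_iff, algIso_mulS_one_iff]
  refine ⟨?eq_zero, id, fun hb => ⟨hb, trivial⟩, ?exists_form, ?_, ?_, ?_, ?_⟩
  case eq_zero =>
    rintro ⟨rfl, rfl⟩
    rfl
  case exists_form =>
    by_cases hb : b = 0
    · by_cases hd : d = 0
      · exact Or.inl ⟨hb, hd⟩
      · exact Or.inr (Or.inl ⟨hb, hd⟩)
    · exact Or.inr (Or.inr ⟨d / b, hb, rfl⟩)
  · rintro ⟨⟨-, hd⟩, -, hd'⟩
    exact hd' hd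
  · rintro l ⟨⟨hb, -⟩, hb', -⟩
    exact hb' hb
  · rintro l ⟨⟨hb, -⟩, hb', -⟩
    exact hb' hb
  · rintro l l' hne ⟨⟨-, hl⟩, -, hl'⟩
    exact hne (hl.symm.trans hl')
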